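/- Let η > 0 and a ∈ (0,1), and let P = (0, 0, a, a·e^{−3η}/(a·e^{−3η} + 1 − a)) ∈ ℝ⁴. There exists ε > 0 such that for every v ∈ [0,1]⁴ with ‖v − P‖ < ε, the first two coordinates of the iterates (G₁∘G₂)ⁿ(v) converge to 0 as n → ∞. -/

import Mathlib

/-- Two-step OMWU transition map for even starting time. -/
noncomputable def G1 (η : ℝ) (z : EuclideanSpace ℝ (Fin 4)) : EuclideanSpace ℝ (Fin 4) :=
  !₂[z 1,
    z 1 * Real.exp (3*η - 2*η * z 3 - η * z 2) /
      (z 1 * Real.exp (3*η - 2*η * z 3 - η * z 2)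
        + (1 - z 1) * Real.exp (2*η * z 3 + η * z 2)),
    z 3,
    z 3 * Real.exp (-(3*η) + 2*η * z 1 + η * z 0) /
      (z 3 * Real.exp (-(3*η) + 2*η * z 1 + η * z 0)
        + (1 - z 3) * Real.exp (-(2*η * z 1) - η * z 0))]

/-- Two-step OMWU transition map for odd starting time. -/
noncomputable def G2 (η : ℝ) (z : EuclideanSpace ℝ (Fin 4)) : EuclideanSpace ℝ (Fin 4) :=
  !₂[z 1,
    z 1 * Real.exp (-(3*η) + 2*η * z 3 + η * z 2) /
      (z 1 * Real.exp (-(3*η) + 2*η * z 3 + η * z 2)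
        + (1 - z 1) * Real.exp (-(2*η * z 3) - η * z 2)),
    z 3,
    z 3 * Real.exp (3*η - 2*η * z 1 - η * z 0) /
      (z 3 * Real.exp (3*η - 2*η * z 1 - η * z 0)
        + (1 - z 3) * Real.exp (2*η * z 1 + η * z 0))]

/-!
Write `x` and `y` for the probabilities with which the two players choose their first actions and
`b` for the last coordinate of `P`. Near `P` the `x`-part of the state is small and enters its own
update multiplicatively, so to first order `G1 η ∘ G2 η` multiplies it by `exp (-2η(a - b))`. This
is a contraction: `b` is obtained from `a` by an update with gain `-3η`, so `η(a - b) > 0`. The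
`y`-part moves by at most a constant times `x` plus the distance to the curve
`z 2 = mwuStep (3 * η) (z 3)` of fixed points, and both of these decay geometrically. Hence the
total drift along the curve is summable and small, an orbit started near `P` never leaves the
region where the estimates hold, and `x → 0`.
-/

open Filter Asymptotics Topology

section IterationNearFixedPoints

variable {X : Type*} [PseudoMetricSpace X] {f : X → X} {x₀ : X} {κ : ℝ}

/-- With `dist (f x) x ≤ M * φ x` near `x₀`, the function `dist · x₀ + M / (1 - κ) * φ` decreases
along orbits, so its small sublevel sets are forward invariant. -/
theorem eventually_tendsto_iterate_of_contraction {φ : X → ℝ} (hφ_nonneg : ∀ x, 0 ≤ φ x)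
    (hφ : Tendsto φ (𝓝 x₀) (𝓝 0)) (hκ₀ : 0 ≤ κ) (hκ₁ : κ < 1)
    (hcontr : ∀ᶠ x in 𝓝 x₀, φ (f x) ≤ κ * φ x)
    (hdisp : (fun x => dist (f x) x) =O[𝓝 x₀] φ) :
    ∀ᶠ x in 𝓝 x₀, Tendsto (fun n => φ (f^[n] x)) atTop (𝓝 0) := by
  obtain ⟨M, hM, hdisp⟩ := hdisp.exists_pos
  obtain ⟨r, hr, hball⟩ := Metric.eventually_nhds_iff.1 (hcontr.and hdisp.bound)
  have hκ : 0 < 1 - κ := sub_pos.2 hκ₁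
  set V : X → ℝ := fun x => dist x x₀ + M / (1 - κ) * φ x with hV
  have hdist_le (x : X) : dist x x₀ ≤ V x :=
    le_add_of_nonneg_right (mul_nonneg (by positivity) (hφ_nonneg x))
  have hstep {x : X} (hx : V x < r) : φ (f x) ≤ κ * φ x ∧ V (f x) ≤ V x := by
    obtain ⟨hcx, hdx⟩ := hball ((hdist_le x).trans_lt hx)
    rw [Real.norm_of_nonneg dist_nonneg, Real.norm_of_nonneg (hφ_nonneg x)] at hdx
    refine ⟨hcx, ?_⟩
    calc V (f x) ≤ (M * φ x + dist x x₀) + M / (1 - κ) * (κ * φ x) := by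
          simp only [hV]
          gcongr
          exact (dist_triangle _ x _).trans (by gcongr)
      _ = V x := by simp only [hV]; field_simp; ring
  have hinv : Set.MapsTo f {x | V x < r} {x | V x < r} := fun x hx => (hstep hx).2.trans_lt hx
  have hV_tendsto : Tendsto V (𝓝 x₀) (𝓝 0) := by
    simpa [hV] using (tendsto_id.dist (tendsto_const_nhds (x := x₀))).add (hφ.const_mul _)
  filter_upwards [hV_tendsto.eventually_lt_const hr] with x hx
  have hpow (n : ℕ) : φ (f^[n] x) ≤ κ ^ n * φ x := by
    induction n with
    | zero => simp
    | succ n ih =>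
      rw [Function.iterate_succ_apply', pow_succ', mul_assoc]
      exact (hstep (hinv.iterate n hx)).1.trans (by gcongr)
  refine squeeze_zero (fun n => hφ_nonneg _) hpow ?_
  simpa using (tendsto_pow_atTop_nhds_zero_of_lt_one hκ₀ hκ₁).mul_const (φ x)

/-- The two transverse quantities are combined into `‖p‖ + s * ‖q‖` with a weight `s` so small that
the influence of `p` on `q` does not destroy the contraction. -/
theorem eventually_tendsto_iterate_of_skew_contraction {E F : Type*} [SeminormedAddCommGroup E]
    [SeminormedAddCommGroup F] {p : X → E} {q : X → F}
    (hp : Tendsto p (𝓝 x₀) (𝓝 0)) (hq : Tendsto q (𝓝 x₀) (𝓝 0)) (hκ₀ : 0 ≤ κ) (hκ₁ : κ < 1)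
    (hpf : ∀ᶠ x in 𝓝 x₀, ‖p (f x)‖ ≤ κ * ‖p x‖) (hqf : (fun x => q (f x)) =O[𝓝 x₀] p)
    (hdisp : (fun x => dist (f x) x) =O[𝓝 x₀] fun x => (p x, q x)) :
    ∀ᶠ x in 𝓝 x₀, Tendsto (fun n => p (f^[n] x)) atTop (𝓝 0) ∧
      Tendsto (fun n => q (f^[n] x)) atTop (𝓝 0) := by
  obtain ⟨C, hC, hqf⟩ := hqf.exists_pos
  obtain ⟨s, hs, hsC⟩ : ∃ s > 0, κ + s * C = (1 + κ) / 2 :=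
    ⟨(1 - κ) / (2 * C), div_pos (sub_pos.2 hκ₁) (by positivity), by field_simp; ring⟩
  set φ : X → ℝ := fun x => ‖p x‖ + s * ‖q x‖ with hφ
  have hp_le (x : X) : ‖p x‖ ≤ φ x := le_add_of_nonneg_right (by positivity)
  have hq_le (x : X) : ‖q x‖ ≤ s⁻¹ * φ x := by
    rw [← div_eq_inv_mul, le_div_iff₀' hs]
    exact le_add_of_nonneg_left (norm_nonneg _)
  have hφ_nonneg (x : X) : 0 ≤ φ x := (norm_nonneg _).trans (hp_le x)
  have hφ_tendsto : Tendsto φ (𝓝 x₀) (𝓝 0) := by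
    simpa [hφ] using hp.norm.add (hq.norm.const_mul s)
  have hcontr : ∀ᶠ x in 𝓝 x₀, φ (f x) ≤ (1 + κ) / 2 * φ x := by
    filter_upwards [hpf, hqf.bound] with x hpx hqx
    calc φ (f x) ≤ κ * ‖p x‖ + s * (C * ‖p x‖) := by simp only [hφ]; gcongr
      _ = (1 + κ) / 2 * ‖p x‖ := by rw [← hsC]; ring
      _ ≤ (1 + κ) / 2 * φ x := by gcongr; exact hp_le x
  have hpq : (fun x => (p x, q x)) =O[𝓝 x₀] φ :=
    (IsBigO.of_norm_le hp_le).prod_left <| IsBigO.of_bound s⁻¹ <| .of_forall fun x => by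
      rw [Real.norm_of_nonneg (hφ_nonneg x)]; exact hq_le x
  filter_upwards [eventually_tendsto_iterate_of_contraction hφ_nonneg hφ_tendsto (by linarith)
    (by linarith) hcontr (hdisp.trans hpq)] with x hx
  exact ⟨squeeze_zero_norm (fun n => hp_le _) hx,
    squeeze_zero_norm (fun n => hq_le _) (by simpa using hx.const_mul s⁻¹)⟩

end IterationNearFixedPoints

/-- Multiplicative weights update of the two-action mixed strategy `(y, 1 - y)`, where `c` is the
step size times the payoff advantage of the first action. -/
noncomputable def mwuStep (c y : ℝ) : ℝ := y * Real.exp c / (y * Real.exp c + (1 - y))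

section MultiplicativeWeights

variable {α : Type*} {l : Filter α} {c d y : ℝ}

theorem mul_exp_div_eq_mwuStep (A B y : ℝ) :
    y * Real.exp A / (y * Real.exp A + (1 - y) * Real.exp B) = mwuStep (A - B) y := by
  rw [mwuStep, Real.exp_sub, ← mul_div_mul_right _ _ (inv_ne_zero (Real.exp_ne_zero B))]
  congr 1 <;> field_simp

@[simp]
theorem mwuStep_zero_left (y : ℝ) : mwuStep 0 y = y := by simp [mwuStep]

@[simp]
theorem mwuStep_zero_right (c : ℝ) : mwuStep c 0 = 0 := by simp [mwuStep]

theorem mwuStep_denom_pos (c : ℝ) (hy : y ∈ Set.Icc 0 1) : 0 < y * Real.exp c + (1 - y) := by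
  obtain rfl | hlt := hy.1.eq_or_lt
  · simp
  · have := sub_nonneg.2 hy.2
    positivity

theorem one_sub_mwuStep (c : ℝ) (hy : y ∈ Set.Icc 0 1) :
    1 - mwuStep c y = (1 - y) / (y * Real.exp c + (1 - y)) := by
  rw [mwuStep, one_sub_div (mwuStep_denom_pos c hy).ne', add_sub_cancel_left]

theorem mwuStep_mem_Icc (c : ℝ) (hy : y ∈ Set.Icc 0 1) : mwuStep c y ∈ Set.Icc 0 1 := by
  have hD := mwuStep_denom_pos c hy
  refine ⟨div_nonneg (mul_nonneg hy.1 (Real.exp_pos c).le) hD.le, ?_⟩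
  rw [← sub_nonneg, one_sub_mwuStep c hy]
  exact div_nonneg (sub_nonneg.2 hy.2) hD.le

theorem mwuStep_mem_Ioo (c : ℝ) (hy : y ∈ Set.Ioo 0 1) : mwuStep c y ∈ Set.Ioo 0 1 := by
  have hy' := Set.Ioo_subset_Icc_self hy
  have hD := mwuStep_denom_pos c hy'
  refine ⟨div_pos (mul_pos hy.1 (Real.exp_pos c)) hD, ?_⟩
  rw [← sub_pos, one_sub_mwuStep c hy']
  exact div_pos (sub_pos.2 hy.2) hD

theorem mwuStep_mwuStep (c d : ℝ) (hy : y ∈ Set.Icc 0 1) :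
    mwuStep c (mwuStep d y) = mwuStep (c + d) y := by
  have hD := (mwuStep_denom_pos d hy).ne'
  conv_lhs => rw [mwuStep, one_sub_mwuStep d hy, mwuStep]
  rw [mwuStep, Real.exp_add, div_mul_eq_mul_div, ← add_div, div_div_div_cancel_right₀ hD]
  ring_nf

theorem mul_mwuStep_sub_pos (hc : c ≠ 0) (hy : y ∈ Set.Ioo 0 1) : 0 < c * (mwuStep c y - y) := by
  have hD := mwuStep_denom_pos c (Set.Ioo_subset_Icc_self hy)
  have hexp : 0 < c * (Real.exp c - 1) := by
    obtain hneg | hpos := hc.lt_or_gt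
    · exact mul_pos_of_neg_of_neg hneg (sub_neg.2 (Real.exp_lt_one_iff.2 hneg))
    · exact mul_pos hpos (sub_pos.2 (Real.one_lt_exp_iff.2 hpos))
  have hsub : c * (mwuStep c y - y) =
      y * (1 - y) * (c * (Real.exp c - 1)) / (y * Real.exp c + (1 - y)) := by
    rw [mwuStep]; field_simp; ring
  rw [hsub]
  exact div_pos (mul_pos (mul_pos hy.1 (sub_pos.2 hy.2)) hexp) hD

theorem hasDerivAt_mwuStep (c : ℝ) (hy : y ∈ Set.Icc 0 1) :
    HasDerivAt (fun c => mwuStep c y) (mwuStep c y * (1 - mwuStep c y)) c := by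
  have hD := (mwuStep_denom_pos c hy).ne'
  have hnum : HasDerivAt (fun c => y * Real.exp c) (y * Real.exp c) c :=
    (Real.hasDerivAt_exp c).const_mul y
  refine (hnum.div (hnum.add_const (1 - y)) hD).congr_deriv ?_
  rw [one_sub_mwuStep c hy, mwuStep]
  field_simp
  ring

theorem lipschitzWith_mwuStep (hy : y ∈ Set.Icc 0 1) : LipschitzWith 1 fun c => mwuStep c y := by
  refine lipschitzWith_of_nnnorm_deriv_le (fun c => (hasDerivAt_mwuStep c hy).differentiableAt)
    fun c => ?_
  obtain ⟨h₀, h₁⟩ := mwuStep_mem_Icc c hy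
  rw [(hasDerivAt_mwuStep c hy).deriv, ← NNReal.coe_le_coe, coe_nnnorm,
    Real.norm_of_nonneg (mul_nonneg h₀ (sub_nonneg.2 h₁)), NNReal.coe_one]
  exact mul_le_one₀ h₁ (sub_nonneg.2 h₁) (sub_le_self 1 h₀)

theorem isBigO_mwuStep_sub_mwuStep {c d y : α → ℝ} (hy : ∀ᶠ z in l, y z ∈ Set.Icc 0 1) :
    (fun z => mwuStep (c z) (y z) - mwuStep (d z) (y z)) =O[l] fun z => c z - d z :=
  .of_bound 1 <| hy.mono fun z hz => by
    simpa only [dist_eq_norm, NNReal.coe_one] using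
      (lipschitzWith_mwuStep hz).dist_le_mul (c z) (d z)

theorem tendsto_mwuStep {c' y' : α → ℝ} (hc : Tendsto c' l (𝓝 c))
    (hy' : Tendsto y' l (𝓝 y)) (hy : y ∈ Set.Icc 0 1) :
    Tendsto (fun z => mwuStep (c' z) (y' z)) l (𝓝 (mwuStep c y)) :=
  (hy'.mul hc.rexp).div ((hy'.mul hc.rexp).add (hy'.const_sub 1)) (mwuStep_denom_pos c hy).ne'

theorem eventually_norm_mwuStep_le {c' x : α → ℝ} (hc : Tendsto c' l (𝓝 c))
    (hx : Tendsto x l (𝓝 0)) (hcd : c < d) :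
    ∀ᶠ z in l, ‖mwuStep (c' z) (x z)‖ ≤ Real.exp d * ‖x z‖ := by
  set m : α → ℝ := fun z => Real.exp (c' z) / (x z * Real.exp (c' z) + (1 - x z)) with hm
  have hm_tendsto : Tendsto m l (𝓝 (Real.exp c)) := by
    simpa [hm] using! hc.rexp.div ((hx.mul hc.rexp).add (hx.const_sub 1)) (by simp)
  have hlt : ‖Real.exp c‖ < Real.exp d := by simpa using hcd
  filter_upwards [hm_tendsto.norm.eventually_le_const hlt] with z hz
  calc ‖mwuStep (c' z) (x z)‖ = ‖m z‖ * ‖x z‖ := by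
        rw [mwuStep, mul_div_assoc, norm_mul, mul_comm]
    _ ≤ Real.exp d * ‖x z‖ := by gcongr

end MultiplicativeWeights

theorem G1_eq_G2_neg (η : ℝ) : G1 η = G2 (-η) := by
  funext z
  simp only [G1, G2, mul_neg, neg_mul, neg_neg, sub_eq_add_neg]

section OptimisticDynamics

variable {η a : ℝ}

@[simp]
theorem G2_apply_zero (η : ℝ) (z : EuclideanSpace ℝ (Fin 4)) : G2 η z 0 = z 1 := rfl

@[simp]
theorem G2_apply_two (η : ℝ) (z : EuclideanSpace ℝ (Fin 4)) : G2 η z 2 = z 3 := rfl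

theorem G2_apply_one (η : ℝ) (z : EuclideanSpace ℝ (Fin 4)) :
    G2 η z 1 = mwuStep (η * (4 * z 3 + 2 * z 2 - 3)) (z 1) := by
  refine (mul_exp_div_eq_mwuStep _ _ _).trans ?_
  congr 1; ring

theorem G2_apply_three (η : ℝ) (z : EuclideanSpace ℝ (Fin 4)) :
    G2 η z 3 = mwuStep (η * (3 - 4 * z 1 - 2 * z 0)) (z 3) := by
  refine (mul_exp_div_eq_mwuStep _ _ _).trans ?_
  congr 1; ring

/-- The fixed point `P` of `G1 η ∘ G2 η` at which the first player has abandoned her first action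
and the second player alternates between the last two coordinates. -/
noncomputable def omwuBoundaryPoint (η a : ℝ) : EuclideanSpace ℝ (Fin 4) :=
  !₂[0, 0, a, a * Real.exp (-(3 * η)) / (a * Real.exp (-(3 * η)) + 1 - a)]

/-- Displacement of a state in the directions `z 0` and `z 2` from the curve of fixed points
`z 0 = z 1 = 0`, `z 2 = mwuStep (3 * η) (z 3)`; the remaining transverse direction is `z 1`. -/
noncomputable def omwuTransverse (η : ℝ) (z : EuclideanSpace ℝ (Fin 4)) : ℝ × ℝ :=
  (z 0, z 2 - mwuStep (3 * η) (z 3))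

namespace omwuBoundaryPoint

theorem tendsto_apply_zero : Tendsto (fun z => z 0) (𝓝 (omwuBoundaryPoint η a)) (𝓝 0) :=
  (by fun_prop : Continuous fun z : EuclideanSpace ℝ (Fin 4) => z 0).continuousAt

theorem tendsto_apply_one : Tendsto (fun z => z 1) (𝓝 (omwuBoundaryPoint η a)) (𝓝 0) :=
  (by fun_prop : Continuous fun z : EuclideanSpace ℝ (Fin 4) => z 1).continuousAt

theorem tendsto_apply_two : Tendsto (fun z => z 2) (𝓝 (omwuBoundaryPoint η a)) (𝓝 a) :=
  (by fun_prop : Continuous fun z : EuclideanSpace ℝ (Fin 4) => z 2).continuousAt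

theorem tendsto_apply_three :
    Tendsto (fun z => z 3) (𝓝 (omwuBoundaryPoint η a)) (𝓝 (mwuStep (-(3 * η)) a)) := by
  rw [mwuStep, ← add_sub_assoc]
  exact (by fun_prop : Continuous fun z : EuclideanSpace ℝ (Fin 4) => z 3).continuousAt

theorem eventually_apply_three_mem_Icc (ha : a ∈ Set.Ioo 0 1) :
    ∀ᶠ z in 𝓝 (omwuBoundaryPoint η a), z 3 ∈ Set.Icc (0 : ℝ) 1 :=
  tendsto_apply_three <| Icc_mem_nhds_iff.2 (mwuStep_mem_Ioo _ ha)

theorem eventually_G2_apply_three_mem_Icc (ha : a ∈ Set.Ioo 0 1) :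
    ∀ᶠ z in 𝓝 (omwuBoundaryPoint η a), G2 η z 3 ∈ Set.Icc (0 : ℝ) 1 :=
  (eventually_apply_three_mem_Icc ha).mono fun z hz => by
    rw [G2_apply_three]; exact mwuStep_mem_Icc _ hz

theorem mwuStep_three_mul_mwuStep_neg (η : ℝ) (ha : a ∈ Set.Icc 0 1) :
    mwuStep (3 * η) (mwuStep (-(3 * η)) a) = a := by
  rw [mwuStep_mwuStep _ _ ha, add_neg_cancel, mwuStep_zero_left]

theorem tendsto_mwuStep_apply_three (ha : a ∈ Set.Icc 0 1) :
    Tendsto (fun z => mwuStep (3 * η) (z 3)) (𝓝 (omwuBoundaryPoint η a)) (𝓝 a) := by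
  simpa only [mwuStep_three_mul_mwuStep_neg η ha] using
    tendsto_mwuStep (c := 3 * η) tendsto_const_nhds (tendsto_apply_three (η := η))
      (mwuStep_mem_Icc _ ha)

theorem tendsto_omwuTransverse (ha : a ∈ Set.Icc 0 1) :
    Tendsto (omwuTransverse η) (𝓝 (omwuBoundaryPoint η a)) (𝓝 0) := by
  simpa only [sub_self] using!
    tendsto_apply_zero.prodMk_nhds (tendsto_apply_two.sub (tendsto_mwuStep_apply_three ha))

theorem tendsto_G2_apply_three (ha : a ∈ Set.Icc 0 1) :
    Tendsto (fun z => G2 η z 3) (𝓝 (omwuBoundaryPoint η a)) (𝓝 a) := by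
  have hc : Tendsto (fun z : EuclideanSpace ℝ (Fin 4) => η * (3 - 4 * z 1 - 2 * z 0))
      (𝓝 (omwuBoundaryPoint η a)) (𝓝 (3 * η)) := by
    convert (((tendsto_apply_one.const_mul 4).const_sub 3).sub
      (tendsto_apply_zero.const_mul 2)).const_mul η using 2
    ring
  simpa only [G2_apply_three, mwuStep_three_mul_mwuStep_neg η ha] using
    tendsto_mwuStep hc tendsto_apply_three (mwuStep_mem_Icc _ ha)

theorem tendsto_G2_apply_one_gain :
    Tendsto (fun z : EuclideanSpace ℝ (Fin 4) => η * (4 * z 3 + 2 * z 2 - 3))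
      (𝓝 (omwuBoundaryPoint η a)) (𝓝 (η * (4 * mwuStep (-(3 * η)) a + 2 * a - 3))) :=
  (((tendsto_apply_three.const_mul 4).add (tendsto_apply_two.const_mul 2)).sub_const 3).const_mul η

theorem tendsto_G2_apply_one :
    Tendsto (fun z => G2 η z 1) (𝓝 (omwuBoundaryPoint η a)) (𝓝 0) := by
  simpa only [G2_apply_one, mwuStep_zero_right] using
    tendsto_mwuStep tendsto_G2_apply_one_gain tendsto_apply_one (by simp)

/-- The gains of the two half-rounds at the fixed point add up to `-2η(a - b)`; the gap up to `k`
is split evenly to absorb their variation nearby. -/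
theorem eventually_norm_comp_apply_one_le (ha : a ∈ Set.Icc 0 1) {k : ℝ}
    (hk : -(2 * (η * (a - mwuStep (-(3 * η)) a))) < k) :
    ∀ᶠ z in 𝓝 (omwuBoundaryPoint η a), ‖(G1 η ∘ G2 η) z 1‖ ≤ Real.exp k * ‖z 1‖ := by
  set b := mwuStep (-(3 * η)) a
  obtain ⟨s, hs, hks⟩ : ∃ s > 0, -(2 * (η * (a - b))) + 2 * s = k :=
    ⟨(k - -(2 * (η * (a - b)))) / 2, half_pos (sub_pos.2 hk), by ring⟩
  have hgain₁ : Tendsto (fun z => -η * (4 * G2 η z 3 + 2 * z 3 - 3))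
      (𝓝 (omwuBoundaryPoint η a)) (𝓝 (-η * (4 * a + 2 * b - 3))) :=
    ((((tendsto_G2_apply_three ha).const_mul 4).add
      (tendsto_apply_three.const_mul 2)).sub_const 3).const_mul (-η)
  filter_upwards [
    eventually_norm_mwuStep_le tendsto_G2_apply_one_gain tendsto_apply_one
      (lt_add_of_pos_right _ hs),
    eventually_norm_mwuStep_le hgain₁ tendsto_G2_apply_one (lt_add_of_pos_right _ hs)]
    with z h₂ h₁
  rw [← G2_apply_one] at h₂
  rw [Function.comp_apply, G1_eq_G2_neg, G2_apply_one, G2_apply_two]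
  refine (h₁.trans (mul_le_mul_of_nonneg_left h₂ (Real.exp_pos _).le)).trans_eq ?_
  rw [← mul_assoc, ← Real.exp_add, ← hks]
  congr 2
  ring

theorem G2_apply_one_isBigO :
    (fun z => G2 η z 1) =O[𝓝 (omwuBoundaryPoint η a)] fun z => z 1 := by
  simp only [G2_apply_one]
  exact .of_bound _ (eventually_norm_mwuStep_le tendsto_G2_apply_one_gain tendsto_apply_one
    (lt_add_one _))

/-- The second player's gains `3η` and `-3η` in the two half-rounds cancel, and what remains
vanishes with `z 1`. -/
theorem omwuTransverse_comp_isBigO (ha : a ∈ Set.Ioo 0 1) :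
    (fun z => omwuTransverse η ((G1 η ∘ G2 η) z)) =O[𝓝 (omwuBoundaryPoint η a)] fun z => z 1 := by
  refine G2_apply_one_isBigO.prod_left ?_
  have hy := eventually_G2_apply_three_mem_Icc (η := η) ha
  have hgain : (fun z => 0 - η * (4 * G2 η z 1 + 2 * z 1)) =O[𝓝 (omwuBoundaryPoint η a)]
      fun z => z 1 := by
    simp only [zero_sub]
    exact (((G2_apply_one_isBigO.const_mul_left 4).add
      ((isBigO_refl _ _).const_mul_left 2)).const_mul_left η).neg_left
  refine ((isBigO_mwuStep_sub_mwuStep hy).trans hgain).congr' (hy.mono fun z hz => ?_) .rfl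
  simp only [Function.comp_apply, G1_eq_G2_neg, G2_apply_two, G2_apply_three (-η),
    mwuStep_mwuStep _ _ hz, mwuStep_zero_left, G2_apply_zero]
  congr 2
  ring

theorem comp_apply_three_sub_isBigO (ha : a ∈ Set.Ioo 0 1) :
    (fun z => (G1 η ∘ G2 η) z 3 - z 3) =O[𝓝 (omwuBoundaryPoint η a)] fun z => (z 1, z 0) := by
  have hy := eventually_apply_three_mem_Icc (η := η) ha
  have h₁ : (fun z => z 1) =O[𝓝 (omwuBoundaryPoint η a)] fun z => (z 1, z 0) := isBigO_fst_prod
  have h₀ : (fun z => z 0) =O[𝓝 (omwuBoundaryPoint η a)] fun z => (z 1, z 0) := isBigO_snd_prod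
  have hgain : (fun z => η * (4 * G2 η z 1 - 2 * z 1 - 2 * z 0) - 0)
      =O[𝓝 (omwuBoundaryPoint η a)] fun z => (z 1, z 0) := by
    simp only [sub_zero]
    exact ((((G2_apply_one_isBigO.trans h₁).const_mul_left 4).sub
      (h₁.const_mul_left 2)).sub (h₀.const_mul_left 2)).const_mul_left η
  refine ((isBigO_mwuStep_sub_mwuStep hy).trans hgain).congr' (hy.mono fun z hz => ?_) .rfl
  simp only [Function.comp_apply, G1_eq_G2_neg, G2_apply_three, mwuStep_mwuStep _ _ hz,
    mwuStep_zero_left, G2_apply_zero]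
  congr 2
  ring

theorem comp_apply_two_sub_isBigO (ha : a ∈ Set.Ioo 0 1) :
    (fun z => (G1 η ∘ G2 η) z 2 - z 2) =O[𝓝 (omwuBoundaryPoint η a)]
      fun z => (z 1, omwuTransverse η z) := by
  have hT : omwuTransverse η =O[𝓝 (omwuBoundaryPoint η a)]
      fun z => (z 1, omwuTransverse η z) := isBigO_snd_prod
  have hgain : (fun z => η * (3 - 4 * z 1 - 2 * z 0) - 3 * η) =O[𝓝 (omwuBoundaryPoint η a)]
      fun z => (z 1, omwuTransverse η z) :=
    (((isBigO_fst_prod.const_mul_left (-4)).sub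
      (hT.prod_left_fst.const_mul_left 2)).const_mul_left η).congr_left fun z => by ring
  refine (((isBigO_mwuStep_sub_mwuStep (eventually_apply_three_mem_Icc ha)).trans hgain).sub
    hT.prod_left_snd).congr_left fun z => ?_
  rw [Function.comp_apply, G1_eq_G2_neg, G2_apply_two, G2_apply_three]
  exact sub_sub_sub_cancel_right _ _ _

theorem dist_comp_isBigO (ha : a ∈ Set.Ioo 0 1) :
    (fun z => dist ((G1 η ∘ G2 η) z) z) =O[𝓝 (omwuBoundaryPoint η a)]
      fun z => (z 1, omwuTransverse η z) := by
  have h₁ : (fun z => z 1) =O[𝓝 (omwuBoundaryPoint η a)]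
      fun z => (z 1, omwuTransverse η z) := isBigO_fst_prod
  have h₀ : (fun z => z 0) =O[𝓝 (omwuBoundaryPoint η a)]
      fun z => (z 1, omwuTransverse η z) := isBigO_snd_prod.prod_left_fst
  have hstep₁ : (fun z => (G1 η ∘ G2 η) z 1) =O[𝓝 (omwuBoundaryPoint η a)] fun z => z 1 :=
    .of_bound _ (eventually_norm_comp_apply_one_le (Set.Ioo_subset_Icc_self ha) (lt_add_one _))
  simp only [dist_eq_norm]
  refine (((EuclideanSpace.equiv (Fin 4) ℝ).isBigO_comp_rev _ _).trans
    (isBigO_pi.2 fun i => ?_)).norm_left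
  match i with
  | 0 => exact (G2_apply_one_isBigO.trans h₁).sub h₀
  | 1 => exact (hstep₁.trans h₁).sub h₁
  | 2 => exact comp_apply_two_sub_isBigO ha
  | 3 => exact (comp_apply_three_sub_isBigO ha).trans (h₁.prod_left h₀)

end omwuBoundaryPoint

end OptimisticDynamics

open omwuBoundaryPoint in
theorem omwu_first_two_coords_tend_to_zero_general {η : ℝ} (hη : η ≠ 0) {a : ℝ}
    (ha : a ∈ Set.Ioo 0 1) :
    ∀ᶠ v in 𝓝 (omwuBoundaryPoint η a),
      Tendsto (fun n : ℕ => ((G1 η ∘ G2 η)^[n] v) 0) atTop (𝓝 0) ∧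
      Tendsto (fun n : ℕ => ((G1 η ∘ G2 η)^[n] v) 1) atTop (𝓝 0) := by
  have hgap : 0 < η * (a - mwuStep (-(3 * η)) a) := by
    linarith [mul_mwuStep_sub_pos (neg_ne_zero.2 (mul_ne_zero three_ne_zero hη)) ha]
  have ha' := Set.Ioo_subset_Icc_self ha
  have hcontr := eventually_norm_comp_apply_one_le (η := η) ha'
    (k := -(η * (a - mwuStep (-(3 * η)) a))) (by linarith)
  filter_upwards [eventually_tendsto_iterate_of_skew_contraction tendsto_apply_one
    (tendsto_omwuTransverse ha') (Real.exp_pos _).le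
    (Real.exp_lt_one_iff.2 (neg_neg_of_pos hgap)) hcontr (omwuTransverse_comp_isBigO ha)
    (dist_comp_isBigO ha)] with v ⟨h₁, hT⟩
  exact ⟨hT.fst_nhds, h₁⟩

/-- Near the boundary fixed point `P = (0,0,a, a·e^{−3η}/(a·e^{−3η}+1−a))`, the first
two coordinates of the iterates of `G₁∘G₂` starting from any point of `[0,1]⁴`
converge to `0`. -/
theorem omwu_first_two_coords_tend_to_zero (η : ℝ) (hη : 0 < η) (a : ℝ)
    (ha : a ∈ Set.Ioo (0:ℝ) 1)
    (P : EuclideanSpace ℝ (Fin 4))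
    (hP : P = ![0, 0, a, a * Real.exp (-(3*η)) / (a * Real.exp (-(3*η)) + 1 - a)]) :
    ∃ ε > 0, ∀ v : EuclideanSpace ℝ (Fin 4),
      (∀ i, v i ∈ Set.Icc (0:ℝ) 1) →
      ‖v - P‖ < ε →
      Filter.Tendsto (fun n : ℕ => ((G1 η ∘ G2 η)^[n] v) 0) Filter.atTop (nhds 0) ∧
      Filter.Tendsto (fun n : ℕ => ((G1 η ∘ G2 η)^[n] v) 1) Filter.atTop (nhds 0) := by
  obtain rfl : P = omwuBoundaryPoint η a := WithLp.ofLp_injective 2 hP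
  obtain ⟨ε, hε, hconv⟩ := Metric.eventually_nhds_iff.1
    (omwu_first_two_coords_tend_to_zero_general hη.ne' ha)
  exact ⟨ε, hε, fun v _ hv => hconv (by rwa [dist_eq_norm])⟩
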